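/- arXiv:1503.07221 — 6 statements merged into one kernel-verified Lean document; each statement's English description precedes it below -/
import Mathlib

section
/- The function f : ℝ → ℝ defined by f(t) = 1/2 + (1/√π)·∫₀^{2·artanh(t)} exp(−s²) ds for |t| < 1, f(t) = 0 for t ≤ −1, and f(t) = 1 for t ≥ 1, is infinitely differentiable on all of ℝ (f ∈ C^∞(ℝ)). -/
/-!
With `L t = log ((1 + t) / (1 - t))` and `w t = 1 / (1 - t ^ 2)`, the function is
`1 / 2 + (1 / √π) ∫ s in 0..L t, exp (-s ^ 2)` on `(-1, 1)`. Since `L' = 2 w` and `w' = 2 t w ^ 2`,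
its derivative there is `(2 / √π) w exp (-L ^ 2)`, and the functions
`F a b = L ^ a * w ^ b * exp (-L ^ 2)`, extended by zero outside `(-1, 1)`, satisfy
`(F a b)' = 2 a F (a - 1) (b + 1) + 2 b t F a (b + 1) - 4 F (a + 1) (b + 1)` inside.

The identity `4 w = exp L + exp (-L) + 2` gives `w ≤ exp |L|`, so the Gaussian factor makes every
`F a b` bounded (`cutoffTerm_bound`). Hence `|F a b| ≤ C (1 - t ^ 2) ^ 2`, which shows that `F a b`
is differentiable at `±1` with derivative zero, so the recursion holds on all of `ℝ`
(`hasDerivAt_cutoffTerm`). By induction every `F a b` is smooth. Finally the cut-off function is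
continuous at `±1` by the value of the Gaussian integral, and it is differentiable elsewhere with
continuous derivative `(2 / √π) F 0 1`; this forces the same derivative at `±1`.
-/

open Filter Topology

/-- The function `log ((1 + t) / (1 - t)) = 2 artanh t`, meaningful for `|t| < 1`. -/
noncomputable def twoArtanh (t : ℝ) : ℝ := Real.log ((1 + t) / (1 - t))

/-- The function `L ^ a * (1 - t ^ 2)⁻¹ ^ b * exp (-L ^ 2)` with `L = 2 artanh t` on `(-1, 1)`,
extended by zero. -/
noncomputable def cutoffTerm (a b : ℕ) (t : ℝ) : ℝ :=
  if |t| < 1 then twoArtanh t ^ a * (1 - t ^ 2)⁻¹ ^ b * Real.exp (-twoArtanh t ^ 2) else 0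

lemma inv_le_exp_abs_twoArtanh {t : ℝ} (ht : |t| < 1) :
    (1 - t ^ 2)⁻¹ ≤ Real.exp |twoArtanh t| := by
  obtain ⟨h1, h2⟩ := abs_lt.1 ht
  have hp : 0 < 1 + t := by linarith
  have hm : 0 < 1 - t := by linarith
  have hs : (1 - t ^ 2) ≠ 0 := by nlinarith
  have e1 : Real.exp (twoArtanh t) = (1 + t) / (1 - t) := Real.exp_log (by positivity)
  have e2 : Real.exp (-twoArtanh t) = (1 - t) / (1 + t) := by
    rw [Real.exp_neg, e1, inv_div]
  have key : 4 * (1 - t ^ 2)⁻¹ = Real.exp (twoArtanh t) + Real.exp (-twoArtanh t) + 2 := by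
    rw [e1, e2]
    have : 1 - t ^ 2 = (1 + t) * (1 - t) := by ring
    rw [this]
    field_simp
    ring
  have b1 := Real.exp_le_exp.2 (le_abs_self (twoArtanh t))
  have b2 := Real.exp_le_exp.2 (neg_le_abs (twoArtanh t))
  have b3 := Real.one_le_exp (abs_nonneg (twoArtanh t))
  linarith

lemma cutoffTerm_bound (a b : ℕ) : ∃ C : ℝ, ∀ t, |cutoffTerm a b t| ≤ C := by
  refine ⟨a.factorial * Real.exp ((b + 1) ^ 2), fun t => ?_⟩
  unfold cutoffTerm
  split_ifs with ht
  · have hw0 : 0 ≤ (1 - t ^ 2)⁻¹ := by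
      have := (sq_lt_one_iff_abs_lt_one t).2 ht
      exact inv_nonneg.2 (by linarith)
    have hw := inv_le_exp_abs_twoArtanh ht
    set x := |twoArtanh t| with hx
    have hx0 : 0 ≤ x := abs_nonneg _
    have hpow : x ^ a ≤ a.factorial * Real.exp x := by
      have := Real.pow_div_factorial_le_exp x hx0 a
      rwa [div_le_iff₀' (by positivity)] at this
    rw [abs_mul, abs_mul, abs_pow, abs_pow, abs_of_nonneg hw0, Real.abs_exp, ← hx,
      ← sq_abs (twoArtanh t), ← hx]
    calc x ^ a * (1 - t ^ 2)⁻¹ ^ b * Real.exp (-x ^ 2)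
        ≤ (a.factorial * Real.exp x) * Real.exp x ^ b * Real.exp (-x ^ 2) := by gcongr
      _ = a.factorial * Real.exp ((b + 1) * x - x ^ 2) := by
          rw [← Real.exp_nat_mul, mul_assoc, mul_assoc, ← Real.exp_add, ← Real.exp_add]
          ring_nf
      _ ≤ a.factorial * Real.exp ((b + 1) ^ 2) := by
          gcongr
          nlinarith [sq_nonneg (x - (b + 1)), mul_nonneg (by positivity : (0 : ℝ) ≤ b + 1) hx0]
  · rw [abs_zero]; positivity

lemma hasDerivAt_twoArtanh {t : ℝ} (ht : |t| < 1) :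
    HasDerivAt twoArtanh (2 * (1 - t ^ 2)⁻¹) t := by
  obtain ⟨h1, h2⟩ := abs_lt.1 ht
  have hp : 0 < 1 + t := by linarith
  have hm : 0 < 1 - t := by linarith
  have h := ((((hasDerivAt_id' t).const_add 1).div ((hasDerivAt_id' t).const_sub 1) hm.ne').log
    (by simp only [Pi.div_apply]; positivity))
  refine HasDerivAt.congr_deriv (f := twoArtanh) h ?_
  have : 1 - t ^ 2 = (1 + t) * (1 - t) := by ring
  simp only [Pi.div_apply]
  rw [this]
  field_simp
  ring

lemma eventually_abs_lt {t : ℝ} (ht : |t| < 1) : ∀ᶠ s in 𝓝 t, |s| < 1 :=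
  continuous_abs.continuousAt.eventually_lt continuousAt_const ht

lemma eventually_lt_abs {t : ℝ} (ht : 1 < |t|) : ∀ᶠ s in 𝓝 t, 1 < |s| :=
  continuousAt_const.eventually_lt continuous_abs.continuousAt ht

/-- The derivative of `cutoffTerm a b`, on all of `ℝ`. When `a = 0` the truncated `a - 1` is
harmless because of the factor `a`. -/
lemma hasDerivAt_cutoffTerm (a b : ℕ) (t : ℝ) :
    HasDerivAt (cutoffTerm a b)
      (2 * a * cutoffTerm (a - 1) (b + 1) t + 2 * b * t * cutoffTerm a (b + 1) t
        - 4 * cutoffTerm (a + 1) (b + 1) t) t := by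
  rcases lt_trichotomy |t| 1 with ht | ht | ht
  · have hs : 1 - t ^ 2 ≠ 0 := by
      have := (sq_lt_one_iff_abs_lt_one t).2 ht
      linarith
    have hL := hasDerivAt_twoArtanh ht
    have hw : HasDerivAt (fun s : ℝ => (1 - s ^ 2)⁻¹) (2 * t * (1 - t ^ 2)⁻¹ ^ 2) t := by
      have h := (((hasDerivAt_id' t).pow 2).const_sub 1).inv (by simpa using hs)
      refine HasDerivAt.congr_deriv (f := fun s : ℝ => (1 - s ^ 2)⁻¹) h ?_
      simp [div_eq_mul_inv]
    have h := ((hL.pow a).mul (hw.pow b)).mul ((hL.pow 2).neg.exp)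
    have heq : cutoffTerm a b =ᶠ[𝓝 t]
        fun s => twoArtanh s ^ a * (1 - s ^ 2)⁻¹ ^ b * Real.exp (-twoArtanh s ^ 2) := by
      filter_upwards [eventually_abs_lt ht] with s hs'
      simp [cutoffTerm, hs']
    refine HasDerivAt.congr_of_eventuallyEq (HasDerivAt.congr_deriv h ?_) heq
    simp only [cutoffTerm, ht, if_true, Pi.pow_apply, Pi.mul_apply, Pi.neg_apply]
    generalize (1 - t ^ 2)⁻¹ = w
    rcases b with _ | b
    · simp
      ring
    · simp only [Nat.add_sub_cancel]
      push_cast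
      ring
  · obtain ⟨C, hC⟩ := cutoffTerm_bound a (b + 2)
    have ht2 : t ^ 2 = 1 := by rw [← sq_abs, ht, one_pow]
    have hbd : ∀ s, ‖cutoffTerm a b s‖ ≤ C * ‖(1 - s ^ 2) ^ 2‖ := by
      intro s
      by_cases hs : |s| < 1
      · have hs0 : 1 - s ^ 2 ≠ 0 := by
          have := (sq_lt_one_iff_abs_lt_one s).2 hs
          linarith
        have hF : cutoffTerm a b s = cutoffTerm a (b + 2) s * (1 - s ^ 2) ^ 2 := by
          simp only [cutoffTerm, hs, if_true]
          rw [pow_add]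
          field_simp
        rw [hF, norm_mul]
        exact mul_le_mul_of_nonneg_right (hC s) (norm_nonneg _)
      · have hC0 : 0 ≤ C := (abs_nonneg _).trans (hC 0)
        simp only [cutoffTerm, hs, if_false, norm_zero]
        positivity
    have hq : HasDerivAt (fun s : ℝ => (1 - s ^ 2) ^ 2) 0 t := by
      have h := (((hasDerivAt_id' t).pow 2).const_sub 1).pow 2
      refine HasDerivAt.congr_deriv (f := fun s : ℝ => (1 - s ^ 2) ^ 2) h ?_
      simp [ht2]
    rw [hasDerivAt_iff_isLittleO] at hq ⊢
    have hO : cutoffTerm a b =O[𝓝 t] fun s : ℝ => (1 - s ^ 2) ^ 2 :=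
      Asymptotics.IsBigO.of_bound C (Eventually.of_forall hbd)
    have := hO.trans_isLittleO (by simpa [ht2] using hq)
    have h0 : ∀ a b, cutoffTerm a b t = 0 := fun a b => by simp [cutoffTerm, ht]
    simpa [h0] using this
  · have heq : cutoffTerm a b =ᶠ[𝓝 t] fun _ => 0 := by
      filter_upwards [eventually_lt_abs ht] with s hs
      simp [cutoffTerm, hs.le.not_gt]
    refine HasDerivAt.congr_of_eventuallyEq (HasDerivAt.congr_deriv (hasDerivAt_const t 0) ?_) heq
    simp [cutoffTerm, ht.le.not_gt]

lemma contDiff_cutoffTerm_nat (n : ℕ) : ∀ a b : ℕ, ContDiff ℝ n (cutoffTerm a b) := by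
  induction n with
  | zero =>
    intro a b
    exact contDiff_zero.2
      (continuous_iff_continuousAt.2 fun t => (hasDerivAt_cutoffTerm a b t).continuousAt)
  | succ n ih =>
    intro a b
    push_cast
    rw [contDiff_succ_iff_deriv]
    refine ⟨fun t => (hasDerivAt_cutoffTerm a b t).differentiableAt, by simp, ?_⟩
    rw [funext fun t => (hasDerivAt_cutoffTerm a b t).deriv]
    exact ((contDiff_const.mul (ih _ _)).add
      ((contDiff_const.mul contDiff_id).mul (ih _ _))).sub (contDiff_const.mul (ih _ _))

lemma contDiff_cutoffTerm (a b : ℕ) : ContDiff ℝ (⊤ : ℕ∞) (cutoffTerm a b) :=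
  contDiff_infty.2 fun n => contDiff_cutoffTerm_nat n a b

/-- The function `(1 + erf x) / 2`. -/
noncomputable def gaussStep (x : ℝ) : ℝ :=
  1 / 2 + (1 / Real.sqrt Real.pi) * ∫ s in (0 : ℝ)..x, Real.exp (-s ^ 2)

lemma hasDerivAt_gaussStep (x : ℝ) :
    HasDerivAt gaussStep ((1 / Real.sqrt Real.pi) * Real.exp (-x ^ 2)) x := by
  have hc : Continuous fun s : ℝ => Real.exp (-s ^ 2) := by fun_prop
  exact ((hc.integral_hasStrictDerivAt 0 x).hasDerivAt.const_mul _).const_add _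

lemma gaussStep_neg (x : ℝ) : gaussStep (-x) = 1 - gaussStep x := by
  have h : ∫ s in (0 : ℝ)..(-x), Real.exp (-s ^ 2) = -∫ s in (0 : ℝ)..x, Real.exp (-s ^ 2) := by
    have h := intervalIntegral.integral_comp_neg (a := x) (b := 0)
      (fun s : ℝ => Real.exp (-s ^ 2))
    simp only [neg_sq, neg_zero] at h
    rw [← h, intervalIntegral.integral_symm]
  simp only [gaussStep, h]
  ring

lemma tendsto_gaussStep_atTop : Tendsto gaussStep atTop (𝓝 1) := by
  have hint := integrable_exp_neg_mul_sq (b := 1) one_pos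
  have hval := integral_gaussian_Ioi 1
  simp only [neg_mul, one_mul, div_one] at hint hval
  have h := MeasureTheory.intervalIntegral_tendsto_integral_Ioi 0 hint.integrableOn tendsto_id
  rw [hval] at h
  have h2 := (h.const_mul (1 / Real.sqrt Real.pi)).const_add (1 / 2)
  have hpi : Real.sqrt Real.pi ≠ 0 := (Real.sqrt_pos.2 Real.pi_pos).ne'
  have e : 1 / 2 + 1 / Real.sqrt Real.pi * (Real.sqrt Real.pi / 2) = 1 := by
    field_simp
    norm_num
  rw [e] at h2
  exact h2

lemma tendsto_twoArtanh : Tendsto twoArtanh (𝓝[<] 1) atTop := by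
  refine Real.tendsto_log_atTop.comp ?_
  have h1 : Tendsto (fun t : ℝ => 1 + t) (𝓝[<] 1) (𝓝 2) := by
    have : ContinuousAt (fun t : ℝ => 1 + t) 1 := by fun_prop
    have h := this.tendsto.mono_left (nhdsWithin_le_nhds (s := Set.Iio 1))
    norm_num at h
    exact h
  have h2 : Tendsto (fun t : ℝ => (1 - t)⁻¹) (𝓝[<] 1) atTop := by
    refine tendsto_inv_nhdsGT_zero.comp (tendsto_nhdsWithin_iff.2 ⟨?_, ?_⟩)
    · have : ContinuousAt (fun t : ℝ => 1 - t) 1 := by fun_prop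
      have h := this.tendsto.mono_left (nhdsWithin_le_nhds (s := Set.Iio 1))
      simpa using h
    · filter_upwards [self_mem_nhdsWithin] with t ht
      simpa using ht
  exact h1.pos_mul_atTop two_pos h2

lemma twoArtanh_neg (t : ℝ) : twoArtanh (-t) = -twoArtanh t := by
  rw [twoArtanh, twoArtanh, ← Real.log_inv, inv_div, sub_neg_eq_add, ← sub_eq_add_neg]

/-- A function that is `(1 + erf (2 artanh t)) / 2` on `(-1, 1)` and `1` on `[1, ∞)` is continuous
at `1`. -/
lemma continuousAt_one {f : ℝ → ℝ} (hmid : ∀ t, |t| < 1 → f t = gaussStep (twoArtanh t))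
    (hright : ∀ t, 1 ≤ t → f t = 1) : ContinuousAt f 1 := by
  rw [continuousAt_iff_continuous_left'_right']
  constructor
  · rw [ContinuousWithinAt, hright 1 le_rfl]
    refine (tendsto_gaussStep_atTop.comp tendsto_twoArtanh).congr' ?_
    filter_upwards [Ioo_mem_nhdsLT (show (-1 : ℝ) < 1 by norm_num)] with t ht
    exact (hmid t (abs_lt.2 ht)).symm
  · rw [ContinuousWithinAt, hright 1 le_rfl]
    refine tendsto_const_nhds.congr' ?_
    filter_upwards [self_mem_nhdsWithin] with t ht
    exact (hright t (le_of_lt ht)).symm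

/-- A local version of `hasDerivAt_of_hasDerivAt_of_ne`, needed because the cut-off function has two
gluing points. -/
lemma hasDerivAt_of_eventually_ne {f g : ℝ → ℝ} {x : ℝ}
    (hfg : ∀ᶠ y in 𝓝[≠] x, HasDerivAt f (g y) y) (hf : ContinuousAt f x)
    (hg : ContinuousAt g x) : HasDerivAt f (g x) x := by
  have hr : ∀ᶠ y in 𝓝[>] x, HasDerivAt f (g y) y :=
    hfg.filter_mono (nhdsWithin_mono x fun y hy => ne_of_gt hy)
  have hl : ∀ᶠ y in 𝓝[<] x, HasDerivAt f (g y) y :=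
    hfg.filter_mono (nhdsWithin_mono x fun y hy => ne_of_lt hy)
  have A : HasDerivWithinAt f (g x) (Set.Ici x) x :=
    hasDerivWithinAt_Ici_of_tendsto_deriv
      (fun y (hy : HasDerivAt f (g y) y) => hy.differentiableAt.differentiableWithinAt)
      hf.continuousWithinAt hr
      ((hg.tendsto.mono_left nhdsWithin_le_nhds).congr' (hr.mono fun y hy => hy.deriv.symm))
  have B : HasDerivWithinAt f (g x) (Set.Iic x) x :=
    hasDerivWithinAt_Iic_of_tendsto_deriv
      (fun y (hy : HasDerivAt f (g y) y) => hy.differentiableAt.differentiableWithinAt)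
      hf.continuousWithinAt hl
      ((hg.tendsto.mono_left nhdsWithin_le_nhds).congr' (hl.mono fun y hy => hy.deriv.symm))
  simpa using B.union A

/-- The cut-off function `f` from the paper: `f(t) = 1/2 + erf(2 artanh t)/2` for `|t| < 1`,
`f(t) = 0` for `t ≤ -1` and `f(t) = 1` for `t ≥ 1`, with
`artanh t = (1/2) log((1+t)/(1-t))` and `erf x = (2/√π) ∫₀ˣ exp(-s²) ds`,
is infinitely differentiable on all of `ℝ`. -/
theorem smooth_cutoff_function
    (f : ℝ → ℝ)
    (hmid : ∀ t : ℝ, |t| < 1 →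
      f t = 1 / 2 + (1 / Real.sqrt Real.pi) *
        ∫ s in (0 : ℝ)..(2 * ((1 / 2) * Real.log ((1 + t) / (1 - t)))), Real.exp (-s ^ 2))
    (hleft : ∀ t : ℝ, t ≤ -1 → f t = 0)
    (hright : ∀ t : ℝ, 1 ≤ t → f t = 1) :
    ContDiff ℝ (⊤ : ℕ∞) f := by
  have hmid' : ∀ t, |t| < 1 → f t = gaussStep (twoArtanh t) := by
    intro t ht
    rw [hmid t ht, gaussStep, twoArtanh]
    congr 3
    ring
  have hc1 : ContinuousAt f 1 := continuousAt_one hmid' hright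
  have hcm1 : ContinuousAt f (-1) := by
    -- The reflected function `1 - f (-t)` satisfies the same hypotheses as `f`.
    have h : ContinuousAt (fun t => 1 - f (-t)) 1 := by
      refine continuousAt_one (fun t ht => ?_) (fun t ht => ?_)
      · rw [hmid' (-t) (by rwa [abs_neg]), twoArtanh_neg, gaussStep_neg]
        ring
      · rw [hleft (-t) (by linarith), sub_zero]
    have h' : ContinuousAt (fun t => 1 - (1 - f (- -t))) (-1) :=
      continuousAt_const.sub
        (ContinuousAt.comp (f := fun t : ℝ => -t) (g := fun t => 1 - f (-t))
          (by simpa using h) continuous_neg.continuousAt)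
    simpa using h'
  set g : ℝ → ℝ := fun t => 2 / Real.sqrt Real.pi * cutoffTerm 0 1 t with hg
  have hgs : ContDiff ℝ (⊤ : ℕ∞) g := contDiff_const.mul (contDiff_cutoffTerm 0 1)
  have hne : ∀ t, |t| ≠ 1 → HasDerivAt f (g t) t := by
    intro t ht
    rcases lt_or_gt_of_ne ht with ht | ht
    · have h := (hasDerivAt_gaussStep (twoArtanh t)).comp t (hasDerivAt_twoArtanh ht)
      refine HasDerivAt.congr_of_eventuallyEq (HasDerivAt.congr_deriv h ?_)
        ((eventually_abs_lt ht).mono hmid')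
      simp only [hg, cutoffTerm, ht, if_true]
      ring
    · have hg0 : g t = 0 := by simp [hg, cutoffTerm, ht.le.not_gt]
      rw [hg0]
      rcases lt_abs.1 ht with h | h
      · refine (hasDerivAt_const t (1 : ℝ)).congr_of_eventuallyEq ?_
        filter_upwards [lt_mem_nhds h] with s hs
        exact hright s hs.le
      · refine (hasDerivAt_const t (0 : ℝ)).congr_of_eventuallyEq ?_
        filter_upwards [gt_mem_nhds (show t < -1 by linarith)] with s hs
        exact hleft s hs.le
  have hd : ∀ t, HasDerivAt f (g t) t := by
    intro t
    by_cases ht : |t| = 1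
    · have hft : ContinuousAt f t := by
        rcases eq_or_eq_neg_of_abs_eq ht with rfl | rfl
        exacts [hc1, hcm1]
      refine hasDerivAt_of_eventually_ne ?_ hft hgs.continuous.continuousAt
      -- The other gluing point is `-t`, which stays away from `t`.
      have hneg : t ≠ -t := fun h => by
        have : t = 0 := by linarith
        simp [this] at ht
      filter_upwards [self_mem_nhdsWithin,
        nhdsWithin_le_nhds (isOpen_ne.mem_nhds hneg)] with y hy hy'
      refine hne y fun h => ?_
      rcases abs_eq_abs.1 (h.trans ht.symm) with h | h
      exacts [hy h, hy' h]
    · exact hne t ht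
  rw [contDiff_infty_iff_deriv]
  refine ⟨fun t => (hd t).differentiableAt, ?_⟩
  rw [funext fun t => (hd t).deriv]
  exact hgs
end

section
/- For every i, the bump function ρ_i is infinitely differentiable on ℝ and its support is contained in the interval [t_{i−1}, t_{i+1}]. -/
/-! The only delicate point is the smoothness of the transition function `f` at `±1`, where a
formula on `(-1, 1)` is glued to constants.

In the variable `u = log ((1 + t) / (1 - t))`, a diffeomorphism from `(-1, 1)` to `ℝ`, derivatives
are governed by the space `gaussExp` spanned by the functions `u ↦ u ^ m * exp (k * u - u ^ 2)`. It
is closed under differentiation and under multiplication by `exp (c * u)`, and its elements vanish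
at `±∞`. Since `du/dt = 2 / (1 - t ^ 2) = (exp u + 2 + exp (-u)) / 2`, the extension by zero
`zeroExt H` of `t ↦ H u` has, for `H` in `gaussExp`, a derivative of the same form inside `(-1, 1)`
(`exists_hasDerivAt_zeroExt`). At the end points, the difference quotient is itself such an
extension, because `1 / (1 - t) = (exp u + 1) / 2` and `1 / (1 + t) = (exp (-u) + 1) / 2`; hence it
tends to `0`. By induction `zeroExt H` is smooth (`contDiff_zeroExt`).

The function `f` is continuous by the value of the Gaussian integral, and away from `±1` its
derivative is such a `zeroExt H`; by continuity of `f` and `zeroExt H` this persists at `±1`, so `f`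
is smooth (`contDiff_transition`). Finally `ρ_i = f_{i-1} - f_i` on the whole line, because `f_i`
vanishes to the left of `t_i` and `f_{i-1}` equals `1` to the right of it. -/

open Filter Set Topology

/-- The change of variables `t ↦ log ((1 + t) / (1 - t)) = 2 artanh t`, meaningful for
`|t| < 1`. -/
noncomputable def logRatio (t : ℝ) : ℝ := Real.log ((1 + t) / (1 - t))

/-- The generator `u ↦ u ^ m * exp (k * u - u ^ 2)`. -/
noncomputable def gaussExpMonomial (m : ℕ) (k : ℝ) (u : ℝ) : ℝ :=
  u ^ m * Real.exp (k * u - u ^ 2)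

/-- The space of linear combinations of polynomials times `exp (k * u - u ^ 2)`, `k` real. -/
noncomputable def gaussExp : Submodule ℝ (ℝ → ℝ) :=
  Submodule.span ℝ (range fun p : ℕ × ℝ ↦ gaussExpMonomial p.1 p.2)

/-- The function `t ↦ H (log ((1 + t) / (1 - t)))` on `(-1, 1)`, extended by zero to `ℝ`. -/
noncomputable def zeroExt (H : ℝ → ℝ) (t : ℝ) : ℝ :=
  open Classical in if -1 < t ∧ t < 1 then H (logRatio t) else 0

lemma gaussExpMonomial_mem (m : ℕ) (k : ℝ) : gaussExpMonomial m k ∈ gaussExp :=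
  Submodule.subset_span ⟨(m, k), rfl⟩

lemma exp_mul_mem_gaussExp (c : ℝ) {H : ℝ → ℝ} (hH : H ∈ gaussExp) :
    (fun u ↦ Real.exp (c * u) * H u) ∈ gaussExp := by
  unfold gaussExp at hH
  induction hH using Submodule.span_induction with
  | mem x hx =>
    obtain ⟨⟨m, k⟩, rfl⟩ := hx
    convert gaussExpMonomial_mem m (c + k) using 1
    ext u
    simp only [gaussExpMonomial]
    rw [mul_left_comm, ← Real.exp_add]
    ring_nf
  | zero =>
    convert gaussExp.zero_mem using 1
    ext u
    simp
  | add x y _ _ hx hy =>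
    convert gaussExp.add_mem hx hy using 1
    ext u
    simp [mul_add]
  | smul a x _ hx =>
    convert gaussExp.smul_mem a hx using 1
    ext u
    simp [mul_left_comm]

lemma exists_hasDerivAt_of_mem_gaussExp {H : ℝ → ℝ} (hH : H ∈ gaussExp) :
    ∃ H' ∈ gaussExp, ∀ u, HasDerivAt H (H' u) u := by
  unfold gaussExp at hH
  induction hH using Submodule.span_induction with
  | mem x hx =>
    obtain ⟨⟨m, k⟩, rfl⟩ := hx
    refine ⟨(m : ℝ) • gaussExpMonomial (m - 1) k + k • gaussExpMonomial m k
      - (2 : ℝ) • gaussExpMonomial (m + 1) k, ?_, fun u ↦ ?_⟩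
    · exact gaussExp.sub_mem (gaussExp.add_mem
        (gaussExp.smul_mem _ (gaussExpMonomial_mem _ _))
        (gaussExp.smul_mem _ (gaussExpMonomial_mem _ _)))
        (gaussExp.smul_mem _ (gaussExpMonomial_mem _ _))
    · have h1 : HasDerivAt (fun u : ℝ ↦ k * u - u ^ 2) (k - 2 * u) u := by
        refine (((hasDerivAt_id u).const_mul k).sub (hasDerivAt_pow 2 u)).congr_deriv ?_
        simp
      have h2 := (hasDerivAt_pow m u).mul h1.exp
      refine h2.congr_deriv ?_
      simp only [gaussExpMonomial, Pi.add_apply, Pi.sub_apply, Pi.smul_apply, smul_eq_mul]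
      ring
  | zero => exact ⟨0, gaussExp.zero_mem, fun u ↦ hasDerivAt_const u 0⟩
  | add x y _ _ hx hy =>
    obtain ⟨x', hx', hx⟩ := hx
    obtain ⟨y', hy', hy⟩ := hy
    exact ⟨x' + y', gaussExp.add_mem hx' hy', fun u ↦ (hx u).add (hy u)⟩
  | smul a x _ hx =>
    obtain ⟨x', hx', hx⟩ := hx
    exact ⟨a • x', gaussExp.smul_mem a hx', fun u ↦ (hx u).const_smul a⟩

lemma tendsto_zero_of_mem_gaussExp {H : ℝ → ℝ} (hH : H ∈ gaussExp) :
    Tendsto H (atBot ⊔ atTop) (𝓝 0) := by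
  unfold gaussExp at hH
  induction hH using Submodule.span_induction with
  | mem x hx =>
    obtain ⟨⟨m, k⟩, rfl⟩ := hx
    rw [← cocompact_eq_atBot_atTop]
    have h := (cexp_neg_quadratic_isLittleO_abs_rpow_cocompact (a := -1) (by simp) k
      (-(m : ℝ))).norm_left.tendsto_div_nhds_zero.norm
    rw [norm_zero] at h
    refine tendsto_zero_iff_norm_tendsto_zero.2 (h.congr fun u ↦ ?_)
    have he : (-1 * (u : ℂ) ^ 2 + k * u) = ((k * u - u ^ 2 : ℝ) : ℂ) := by
      push_cast
      ring
    simp only [gaussExpMonomial]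
    rw [he, Complex.norm_exp, Complex.ofReal_re, Real.rpow_neg (abs_nonneg u), Real.rpow_natCast]
    simp [mul_comm]
  | zero => exact tendsto_const_nhds
  | add x y _ _ hx hy => exact add_zero (0 : ℝ) ▸ hx.add hy
  | smul a x _ hx => exact smul_zero (A := ℝ) a ▸ hx.const_smul a

lemma exp_logRatio {t : ℝ} (h1 : -1 < t) (h2 : t < 1) :
    Real.exp (logRatio t) = (1 + t) / (1 - t) :=
  Real.exp_log (div_pos (by linarith) (by linarith))

lemma exp_neg_logRatio {t : ℝ} (h1 : -1 < t) (h2 : t < 1) :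
    Real.exp (-logRatio t) = (1 - t) / (1 + t) := by
  rw [Real.exp_neg, exp_logRatio h1 h2, inv_div]

lemma hasDerivAt_logRatio {t : ℝ} (h1 : -1 < t) (h2 : t < 1) :
    HasDerivAt logRatio
      ((Real.exp (logRatio t) + 2 + Real.exp (-logRatio t)) / 2) t := by
  have ha : 1 + t ≠ 0 := by linarith
  have hb : 1 - t ≠ 0 := by linarith
  have h := (((hasDerivAt_id t).const_add 1).div ((hasDerivAt_id t).const_sub 1) hb).log
    (div_ne_zero ha hb)
  refine h.congr_deriv ?_
  rw [exp_logRatio h1 h2, exp_neg_logRatio h1 h2]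
  simp only [id, Pi.div_apply]
  field_simp
  ring

lemma tendsto_logRatio_one : Tendsto logRatio (𝓝[<] 1) atTop := by
  refine Real.tendsto_log_atTop.comp ?_
  have h1 : Tendsto (fun t : ℝ ↦ 1 + t) (𝓝[<] 1) (𝓝 2) :=
    (Continuous.tendsto' (by fun_prop) _ _ (by norm_num)).mono_left nhdsWithin_le_nhds
  have h2 : Tendsto (fun t : ℝ ↦ 1 - t) (𝓝[<] 1) (𝓝[>] 0) := by
    refine tendsto_nhdsWithin_iff.2 ⟨(Continuous.tendsto' (by fun_prop) _ _
      (by norm_num)).mono_left nhdsWithin_le_nhds, ?_⟩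
    filter_upwards [self_mem_nhdsWithin] with t ht
    exact sub_pos.2 (mem_Iio.1 ht)
  exact h1.pos_mul_atTop two_pos (tendsto_inv_nhdsGT_zero.comp h2)

lemma logRatio_neg (t : ℝ) : logRatio (-t) = -logRatio t := by
  rw [logRatio, logRatio, ← Real.log_inv, inv_div, sub_neg_eq_add, ← sub_eq_add_neg]

lemma tendsto_logRatio_neg_one : Tendsto logRatio (𝓝[>] (-1)) atBot := by
  have h : Tendsto (fun t : ℝ ↦ -t) (𝓝[>] (-1)) (𝓝[<] 1) := by
    simpa using tendsto_neg_nhdsGT (a := (-1 : ℝ))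
  refine (tendsto_neg_atTop_atBot.comp (tendsto_logRatio_one.comp h)).congr fun t ↦ ?_
  simp [logRatio_neg]

/-- A function given by `H (logRatio t)` on `(-1, 1)` and by constants outside is continuous at
`-1` and `1` as soon as `H` has these constants as limits at `-∞` and `+∞`. -/
lemma continuousAt_of_logRatio {F H : ℝ → ℝ} {a b : ℝ}
    (hF : ∀ t, -1 < t → t < 1 → F t = H (logRatio t))
    (hl : ∀ t, t ≤ -1 → F t = a) (hr : ∀ t, 1 ≤ t → F t = b)
    (ha : Tendsto H atBot (𝓝 a)) (hb : Tendsto H atTop (𝓝 b)) :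
    ContinuousAt F (-1) ∧ ContinuousAt F 1 := by
  constructor
  · rw [continuousAt_iff_continuous_left'_right', ContinuousWithinAt, ContinuousWithinAt,
      hl _ le_rfl]
    constructor
    · refine tendsto_const_nhds.congr' ?_
      filter_upwards [self_mem_nhdsWithin] with t ht
      exact (hl t (le_of_lt ht)).symm
    · refine (ha.comp tendsto_logRatio_neg_one).congr' ?_
      filter_upwards [Ioo_mem_nhdsGT (show (-1 : ℝ) < 1 by norm_num)] with t ht
      exact (hF t ht.1 ht.2).symm
  · rw [continuousAt_iff_continuous_left'_right', ContinuousWithinAt, ContinuousWithinAt,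
      hr _ le_rfl]
    constructor
    · refine (hb.comp tendsto_logRatio_one).congr' ?_
      filter_upwards [Ioo_mem_nhdsLT (show (-1 : ℝ) < 1 by norm_num)] with t ht
      exact (hF t ht.1 ht.2).symm
    · refine tendsto_const_nhds.congr' ?_
      filter_upwards [self_mem_nhdsWithin] with t ht
      exact (hr t (le_of_lt ht)).symm

lemma zeroExt_of_mem (H : ℝ → ℝ) {t : ℝ} (h1 : -1 < t) (h2 : t < 1) :
    zeroExt H t = H (logRatio t) := if_pos ⟨h1, h2⟩

lemma zeroExt_of_le (H : ℝ → ℝ) {t : ℝ} (h : t ≤ -1) : zeroExt H t = 0 :=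
  if_neg fun h' ↦ not_lt.2 h h'.1

lemma zeroExt_of_ge (H : ℝ → ℝ) {t : ℝ} (h : 1 ≤ t) : zeroExt H t = 0 :=
  if_neg fun h' ↦ not_lt.2 h h'.2

lemma continuousAt_zeroExt {H : ℝ → ℝ} (hH : H ∈ gaussExp) :
    ContinuousAt (zeroExt H) (-1) ∧ ContinuousAt (zeroExt H) 1 := by
  have h := tendsto_sup.1 (tendsto_zero_of_mem_gaussExp hH)
  exact continuousAt_of_logRatio (fun t ↦ zeroExt_of_mem H) (fun t ↦ zeroExt_of_le H)
    (fun t ↦ zeroExt_of_ge H) h.1 h.2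

/-- Multiplication by `du/dt`, expressed in the variable `u`, preserves `gaussExp`. -/
lemma weight_mul_mem_gaussExp {H : ℝ → ℝ} (hH : H ∈ gaussExp) :
    (fun u ↦ H u * ((Real.exp u + 2 + Real.exp (-u)) / 2)) ∈ gaussExp := by
  convert gaussExp.add_mem (gaussExp.add_mem
    (gaussExp.smul_mem (1 / 2) (exp_mul_mem_gaussExp 1 hH)) hH)
    (gaussExp.smul_mem (1 / 2) (exp_mul_mem_gaussExp (-1) hH)) using 1
  ext u
  simp only [Pi.add_apply, Pi.smul_apply, smul_eq_mul, one_mul, neg_one_mul]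
  ring

lemma exists_hasDerivAt_zeroExt {H : ℝ → ℝ} (hH : H ∈ gaussExp) :
    ∃ K ∈ gaussExp, ∀ t, HasDerivAt (zeroExt H) (zeroExt K t) t := by
  obtain ⟨H', hH', hd⟩ := exists_hasDerivAt_of_mem_gaussExp hH
  refine ⟨_, weight_mul_mem_gaussExp hH', fun t ↦ ?_⟩
  rcases lt_trichotomy t (-1) with h1 | rfl | h1
  · rw [zeroExt_of_le _ h1.le]
    refine (hasDerivAt_const t (0 : ℝ)).congr_of_eventuallyEq ?_
    filter_upwards [Iio_mem_nhds h1] with s hs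
    exact zeroExt_of_le _ (le_of_lt hs)
  · rw [zeroExt_of_le _ le_rfl, hasDerivAt_iff_tendsto_slope]
    -- the difference quotient at `-1`, written in the variable `u`
    have hQ : (fun u ↦ (1 / 2 : ℝ) * (Real.exp (-1 * u) * H u) + (1 / 2) * H u) ∈ gaussExp :=
      gaussExp.add_mem (gaussExp.smul_mem (1 / 2) (exp_mul_mem_gaussExp (-1) hH))
        (gaussExp.smul_mem (1 / 2) hH)
    have hc := (continuousAt_zeroExt hQ).1.tendsto
    rw [zeroExt_of_le _ le_rfl] at hc
    refine (hc.mono_left nhdsWithin_le_nhds).congr fun s ↦ ?_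
    rw [slope_def_field, zeroExt_of_le H le_rfl]
    rcases le_or_gt s (-1) with hs | hs
    · simp [zeroExt_of_le _ hs]
    rcases le_or_gt 1 s with hs' | hs'
    · simp [zeroExt_of_ge _ hs']
    rw [zeroExt_of_mem _ hs hs', zeroExt_of_mem _ hs hs', neg_one_mul, exp_neg_logRatio hs hs']
    have : 1 + s ≠ 0 := by linarith
    have : s - -1 ≠ 0 := by linarith
    field_simp
    ring
  rcases lt_trichotomy t 1 with h2 | rfl | h2
  · rw [zeroExt_of_mem _ h1 h2]
    refine ((hd _).comp t (hasDerivAt_logRatio h1 h2)).congr_of_eventuallyEq ?_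
    filter_upwards [Ioo_mem_nhds h1 h2] with s hs
    exact zeroExt_of_mem _ hs.1 hs.2
  · rw [zeroExt_of_ge _ le_rfl, hasDerivAt_iff_tendsto_slope]
    -- the difference quotient at `1`, written in the variable `u`
    have hQ : (fun u ↦ (-1 / 2 : ℝ) * (Real.exp (1 * u) * H u) + (-1 / 2) * H u) ∈ gaussExp :=
      gaussExp.add_mem (gaussExp.smul_mem (-1 / 2) (exp_mul_mem_gaussExp 1 hH))
        (gaussExp.smul_mem (-1 / 2) hH)
    have hc := (continuousAt_zeroExt hQ).2.tendsto
    rw [zeroExt_of_ge _ le_rfl] at hc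
    refine (hc.mono_left nhdsWithin_le_nhds).congr fun s ↦ ?_
    rw [slope_def_field, zeroExt_of_ge H le_rfl]
    rcases le_or_gt s (-1) with hs | hs
    · simp [zeroExt_of_le _ hs]
    rcases le_or_gt 1 s with hs' | hs'
    · simp [zeroExt_of_ge _ hs']
    rw [zeroExt_of_mem _ hs hs', zeroExt_of_mem _ hs hs', one_mul, exp_logRatio hs hs']
    have : 1 - s ≠ 0 := by linarith
    have : s - 1 ≠ 0 := by linarith
    field_simp
    ring
  · rw [zeroExt_of_ge _ h2.le]
    refine (hasDerivAt_const t (0 : ℝ)).congr_of_eventuallyEq ?_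
    filter_upwards [Ioi_mem_nhds h2] with s hs
    exact zeroExt_of_ge _ (le_of_lt hs)

lemma contDiff_zeroExt {H : ℝ → ℝ} (hH : H ∈ gaussExp) :
    ContDiff ℝ (⊤ : ℕ∞) (zeroExt H) := by
  refine contDiff_all_iff_nat.2 (fun m ↦ ?_) ⊤
  induction m generalizing H with
  | zero =>
    obtain ⟨K, -, hd⟩ := exists_hasDerivAt_zeroExt hH
    exact contDiff_zero.2 (continuous_iff_continuousAt.2 fun t ↦ (hd t).continuousAt)
  | succ m ih =>
    obtain ⟨K, hK, hd⟩ := exists_hasDerivAt_zeroExt hH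
    rw [show ((m + 1 : ℕ) : WithTop ℕ∞) = m + 1 from rfl]
    refine contDiff_succ_iff_deriv.2 ⟨fun t ↦ (hd t).differentiableAt, by simp, ?_⟩
    rw [show deriv (zeroExt H) = zeroExt K from funext fun t ↦ (hd t).deriv]
    exact ih hK

lemma tendsto_gauss_integral_atTop :
    Tendsto (fun u : ℝ ↦ ∫ s in (0 : ℝ)..u, Real.exp (-s ^ 2)) atTop (𝓝 (√Real.pi / 2)) := by
  have h := MeasureTheory.intervalIntegral_tendsto_integral_Ioi 0
    (integrable_exp_neg_mul_sq one_pos).integrableOn (tendsto_id (α := ℝ))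
  rw [integral_gaussian_Ioi] at h
  simpa using h

lemma tendsto_gauss_integral_atBot :
    Tendsto (fun u : ℝ ↦ ∫ s in (0 : ℝ)..u, Real.exp (-s ^ 2)) atBot (𝓝 (-(√Real.pi / 2))) := by
  refine (tendsto_gauss_integral_atTop.comp tendsto_neg_atBot_atTop).neg.congr fun u ↦ ?_
  have h := intervalIntegral.integral_comp_neg (a := 0) (b := u) fun s : ℝ ↦ Real.exp (-s ^ 2)
  simp only [even_two.neg_pow, neg_zero] at h
  rw [h, intervalIntegral.integral_symm]
  simp

/-- A local form of `hasDerivAt_of_hasDerivAt_of_ne`: the derivative extends continuously across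
a single exceptional point. -/
lemma hasDerivAt_of_eventually {F g : ℝ → ℝ} {x : ℝ}
    (hd : ∀ᶠ y in 𝓝[≠] x, HasDerivAt F (g y) y) (hF : ContinuousAt F x)
    (hg : ContinuousAt g x) : HasDerivAt F (g x) x := by
  have hlt : ∀ᶠ y in 𝓝[<] x, HasDerivAt F (g y) y :=
    hd.filter_mono (nhdsWithin_mono _ fun _ h ↦ ne_of_lt h)
  have hgt : ∀ᶠ y in 𝓝[>] x, HasDerivAt F (g y) y :=
    hd.filter_mono (nhdsWithin_mono _ fun _ h ↦ ne_of_gt h)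
  have A : HasDerivWithinAt F (g x) (Iic x) x :=
    hasDerivWithinAt_Iic_of_tendsto_deriv (s := {y | HasDerivAt F (g y) y})
      (fun y hy ↦ HasDerivAt.differentiableAt hy |>.differentiableWithinAt)
      hF.continuousWithinAt hlt
      ((hg.tendsto.mono_left nhdsWithin_le_nhds).congr' (hlt.mono fun y hy ↦ hy.deriv.symm))
  have B : HasDerivWithinAt F (g x) (Ici x) x :=
    hasDerivWithinAt_Ici_of_tendsto_deriv (s := {y | HasDerivAt F (g y) y})
      (fun y hy ↦ HasDerivAt.differentiableAt hy |>.differentiableWithinAt)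
      hF.continuousWithinAt hgt
      ((hg.tendsto.mono_left nhdsWithin_le_nhds).congr' (hgt.mono fun y hy ↦ hy.deriv.symm))
  simpa using A.union B

/-- Smoothness of the transition function from `0` to `1`. -/
lemma contDiff_transition {f : ℝ → ℝ}
    (hmid : ∀ t : ℝ, -1 < t → t < 1 →
      f t = 1 / 2 + (1 / √Real.pi) * ∫ s in (0 : ℝ)..(logRatio t), Real.exp (-s ^ 2))
    (hleft : ∀ t : ℝ, t ≤ -1 → f t = 0)
    (hright : ∀ t : ℝ, 1 ≤ t → f t = 1) : ContDiff ℝ (⊤ : ℕ∞) f := by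
  have hpi : √Real.pi ≠ 0 := (Real.sqrt_pos.2 Real.pi_pos).ne'
  have hcont : ContinuousAt f (-1) ∧ ContinuousAt f 1 := by
    refine continuousAt_of_logRatio
      (H := fun u ↦ 1 / 2 + (1 / √Real.pi) * ∫ s in (0 : ℝ)..u, Real.exp (-s ^ 2))
      hmid hleft hright ?_ ?_
    · convert (tendsto_gauss_integral_atBot.const_mul (1 / √Real.pi)).const_add (1 / 2) using 2
      field_simp
      ring
    · convert (tendsto_gauss_integral_atTop.const_mul (1 / √Real.pi)).const_add (1 / 2) using 2
      field_simp
      ring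
  have hG : (fun u : ℝ ↦ 1 / √Real.pi * Real.exp (-u ^ 2)) ∈ gaussExp := by
    convert gaussExp.smul_mem (1 / √Real.pi) (gaussExpMonomial_mem 0 0) using 1
    ext u
    simp [gaussExpMonomial]
  obtain ⟨K, hK, hKu⟩ : ∃ K ∈ gaussExp, ∀ u, K u = 1 / √Real.pi * Real.exp (-u ^ 2) *
      ((Real.exp u + 2 + Real.exp (-u)) / 2) := ⟨_, weight_mul_mem_gaussExp hG, fun _ ↦ rfl⟩
  have hoff : ∀ t, t ≠ -1 → t ≠ 1 → HasDerivAt f (zeroExt K t) t := by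
    intro t hn1 hn2
    rcases lt_or_gt_of_ne hn1 with h1 | h1
    · rw [zeroExt_of_le _ h1.le]
      refine (hasDerivAt_const t (0 : ℝ)).congr_of_eventuallyEq ?_
      filter_upwards [Iio_mem_nhds h1] with s hs
      exact hleft s (le_of_lt hs)
    rcases lt_or_gt_of_ne hn2 with h2 | h2
    · rw [zeroExt_of_mem _ h1 h2, hKu]
      have hc : Continuous fun s : ℝ ↦ Real.exp (-s ^ 2) := by fun_prop
      have hI := ((hc.integral_hasStrictDerivAt 0 (logRatio t)).hasDerivAt.comp t
        (hasDerivAt_logRatio h1 h2)).const_mul (1 / √Real.pi) |>.const_add (1 / 2)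
      rw [mul_assoc]
      refine hI.congr_of_eventuallyEq ?_
      filter_upwards [Ioo_mem_nhds h1 h2] with s hs
      exact hmid s hs.1 hs.2
    · rw [zeroExt_of_ge _ h2.le]
      refine (hasDerivAt_const t (1 : ℝ)).congr_of_eventuallyEq ?_
      filter_upwards [Ioi_mem_nhds h2] with s hs
      exact hright s (le_of_lt hs)
  have hall : ∀ t, HasDerivAt f (zeroExt K t) t := by
    intro t
    by_cases h1 : t = -1
    · subst h1
      refine hasDerivAt_of_eventually ?_ hcont.1 (continuousAt_zeroExt hK).1
      filter_upwards [self_mem_nhdsWithin, nhdsWithin_le_nhds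
        (isOpen_ne.mem_nhds (show (-1 : ℝ) ≠ 1 by norm_num))] with y hy hy'
      exact hoff y hy hy'
    by_cases h2 : t = 1
    · subst h2
      refine hasDerivAt_of_eventually ?_ hcont.2 (continuousAt_zeroExt hK).2
      filter_upwards [self_mem_nhdsWithin, nhdsWithin_le_nhds
        (isOpen_ne.mem_nhds (show (1 : ℝ) ≠ -1 by norm_num))] with y hy hy'
      exact hoff y hy' hy
    exact hoff t h1 h2
  rw [contDiff_infty_iff_deriv, show deriv f = zeroExt K from funext fun t ↦ (hall t).deriv]
  exact ⟨fun t ↦ (hall t).differentiableAt, contDiff_zeroExt hK⟩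

/-- For every `i`, the bump function `ρ_i` (built from the smooth cut-off function `f`,
with equidistant timesteps `t_j = j Δt`, `Δt = T/(N-1)`) is infinitely differentiable
and its support is contained in `[t_{i-1}, t_{i+1}]`. -/
theorem bump_smooth_and_support
    (T : ℝ) (hT : 0 < T) (N : ℕ) (hN : 2 ≤ N)
    (Δt : ℝ) (hΔt : Δt = T / ((N : ℝ) - 1))
    (tj : ℤ → ℝ) (htj : ∀ j : ℤ, tj j = (j : ℝ) * Δt)
    (f : ℝ → ℝ)
    (hmid : ∀ t : ℝ, |t| < 1 →
      f t = 1 / 2 + (1 / Real.sqrt Real.pi) *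
        ∫ s in (0 : ℝ)..(2 * ((1 / 2) * Real.log ((1 + t) / (1 - t)))), Real.exp (-s ^ 2))
    (hleft : ∀ t : ℝ, t ≤ -1 → f t = 0)
    (hright : ∀ t : ℝ, 1 ≤ t → f t = 1)
    (fj : ℤ → ℝ → ℝ) (hfj : ∀ (j : ℤ) (t : ℝ), fj j t = f (2 * (t - tj j) / Δt - 1))
    (ρ : ℤ → ℝ → ℝ)
    (hρ₁ : ∀ (i : ℤ) (t : ℝ), tj (i - 1) ≤ t → t ≤ tj i → ρ i t = fj (i - 1) t)
    (hρ₂ : ∀ (i : ℤ) (t : ℝ), tj i ≤ t → t ≤ tj (i + 1) → ρ i t = 1 - fj i t)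
    (hρ₀ : ∀ (i : ℤ) (t : ℝ), t < tj (i - 1) ∨ tj (i + 1) < t → ρ i t = 0) :
    ∀ i : ℤ, ContDiff ℝ (⊤ : ℕ∞) (ρ i) ∧
      Function.support (ρ i) ⊆ Set.Icc (tj (i - 1)) (tj (i + 1)) := by
  have hN' : (2 : ℝ) ≤ N := by exact_mod_cast hN
  have hpos : 0 < Δt := by
    rw [hΔt]
    exact div_pos hT (by linarith)
  have hf : ContDiff ℝ (⊤ : ℕ∞) f := by
    refine contDiff_transition (fun t h1 h2 ↦ ?_) hleft hright
    rw [hmid t (abs_lt.2 ⟨h1, h2⟩), ← mul_assoc, mul_one_div_cancel two_ne_zero, one_mul,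
      logRatio]
  have hfjs : ∀ j, ContDiff ℝ (⊤ : ℕ∞) (fj j) := by
    intro j
    rw [show fj j = fun t ↦ f (2 * (t - tj j) / Δt - 1) from funext (hfj j)]
    exact hf.comp (by fun_prop)
  have hstep : ∀ j, tj (j + 1) = tj j + Δt := by
    intro j
    rw [htj, htj]
    push_cast
    ring
  have hzero : ∀ j t, t ≤ tj j → fj j t = 0 := by
    intro j t ht
    rw [hfj]
    apply hleft
    have : 2 * (t - tj j) / Δt ≤ 0 := div_nonpos_of_nonpos_of_nonneg (by linarith) hpos.le
    linarith
  have hone : ∀ j t, tj (j + 1) ≤ t → fj j t = 1 := by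
    intro j t ht
    rw [hfj]
    apply hright
    rw [hstep] at ht
    have : 2 ≤ 2 * (t - tj j) / Δt := by
      rw [le_div_iff₀ hpos]
      linarith
    linarith
  intro i
  have hone' : ∀ t, tj i ≤ t → fj (i - 1) t = 1 := fun t ht ↦ hone (i - 1) t (by simpa using ht)
  have hle1 : tj (i - 1) ≤ tj i := by
    have := hstep (i - 1)
    rw [sub_add_cancel] at this
    linarith
  have hle2 : tj i ≤ tj (i + 1) := by
    rw [hstep]
    linarith
  have hρ : ρ i = fun t ↦ fj (i - 1) t - fj i t := by
    ext t
    rcases le_total t (tj i) with h | h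
    · rw [hzero i t h, sub_zero]
      rcases lt_or_ge t (tj (i - 1)) with h' | h'
      · rw [hρ₀ i t (Or.inl h'), hzero _ t h'.le]
      · exact hρ₁ i t h' h
    · rw [hone' t h]
      rcases lt_or_ge (tj (i + 1)) t with h' | h'
      · rw [hρ₀ i t (Or.inr h'), hone i t h'.le, sub_self]
      · exact hρ₂ i t h h'
  refine ⟨hρ ▸ (hfjs (i - 1)).sub (hfjs i), fun t ht ↦ ?_⟩
  by_contra hn
  refine ht (hρ₀ i t ?_)
  by_contra! hc
  exact hn hc
end

section
/- Let c > 0, let ε_u, ε_v ∈ {−1, 1}, and let u, v : ℝ → ℝ be continuously differentiable functions with support contained in [0, 2c] satisfying u(2c − t) = ε_u·u(t) and v(2c − t) = ε_v·v(t) for all t ∈ ℝ. Define G_{u,v}(α) := ∫_ℝ u(t − α)·v′(t) dt. Then G_{u,v}(α) = ε_u·ε_v·G_{v,u}(α) for every α ∈ ℝ. In particular, with ε_u = (−1)^{m₁} and ε_v = (−1)^{m₂}, one has ξ̃_{m₁,m₂} = (−1)^{m₁+m₂}·ξ̃_{m₂,m₁} as functions on ℝ. -/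
/-!
Integration by parts (the boundary terms vanish by compact support) gives
`∫ u (t - α) v' t = -∫ u' (t - α) v t`. The substitution `t = 2c + α - s` turns the right-hand
side into `-∫ u' (2c - s) v (2c - (s - α))`, and the two reflection symmetries, together with the
extra sign in `u' (2c - s) = -ε_u u' s`, turn this into `ε_u ε_v ∫ v (s - α) u' s`.
-/

open MeasureTheory

/-- Differentiating a reflection symmetry produces an additional sign. -/
lemma deriv_reflect {c ε : ℝ} {u : ℝ → ℝ} (h : ∀ t : ℝ, u (2 * c - t) = ε * u t) (s : ℝ) :
    deriv u (2 * c - s) = -(ε * deriv u s) := by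
  have h1 := deriv_comp_const_sub (f := u) (2 * c) s
  have h2 : (fun t => u (2 * c - t)) = fun t => ε * u t := funext h
  rw [h2, deriv_const_mul_field] at h1
  linarith

lemma integral_shift_mul_deriv {u v : ℝ → ℝ} (hu : ContDiff ℝ 1 u) (hv : ContDiff ℝ 1 v)
    (hcv : HasCompactSupport v) (α : ℝ) :
    ∫ t : ℝ, u (t - α) * deriv v t = -∫ t : ℝ, deriv u (t - α) * v t := by
  have hcu : Continuous fun t : ℝ => u (t - α) := hu.continuous.comp (continuous_sub_right α)
  have hcu' : Continuous fun t : ℝ => deriv u (t - α) :=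
    (hu.continuous_deriv le_rfl).comp (continuous_sub_right α)
  apply integral_mul_deriv_eq_deriv_mul_of_integrable
  · intro t _
    exact (hu.differentiable one_ne_zero (t - α)).hasDerivAt.comp_sub_const t α
  · intro t _
    exact (hv.differentiable one_ne_zero t).hasDerivAt
  · exact (hcu.mul (hv.continuous_deriv le_rfl)).integrable_of_hasCompactSupport hcv.deriv.mul_left
  · exact (hcu'.mul hv.continuous).integrable_of_hasCompactSupport hcv.mul_left
  · exact (hcu.mul hv.continuous).integrable_of_hasCompactSupport hcv.mul_left

/-- Combining the reflection symmetry with integration by parts: for `C¹` functions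
`u, v` supported in `[0, 2c]` and centrally symmetric with signs `ε_u, ε_v ∈ {-1, 1}`,
one has `G_{u,v}(α) = ε_u ε_v G_{v,u}(α)` where `G_{u,v}(α) = ∫ u(t-α) v'(t) dt`;
in particular, with `ε_u = (-1)^{m₁}`, `ε_v = (-1)^{m₂}`,
`ξ̃_{m₁,m₂} = (-1)^{m₁+m₂} ξ̃_{m₂,m₁}` as functions on `ℝ`. -/
theorem prototype_index_symmetry
    (c : ℝ) (hc : 0 < c)
    (εu εv : ℝ) (hεu : εu = -1 ∨ εu = 1) (hεv : εv = -1 ∨ εv = 1)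
    (u v : ℝ → ℝ) (hu : ContDiff ℝ 1 u) (hv : ContDiff ℝ 1 v)
    (hsu : Function.support u ⊆ Set.Icc 0 (2 * c))
    (hsv : Function.support v ⊆ Set.Icc 0 (2 * c))
    (hsymu : ∀ t : ℝ, u (2 * c - t) = εu * u t)
    (hsymv : ∀ t : ℝ, v (2 * c - t) = εv * v t)
    (Guv Gvu : ℝ → ℝ)
    (hGuv : ∀ α : ℝ, Guv α = ∫ t : ℝ, u (t - α) * deriv v t)
    (hGvu : ∀ α : ℝ, Gvu α = ∫ t : ℝ, v (t - α) * deriv u t) :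
    (∀ α : ℝ, Guv α = εu * εv * Gvu α) ∧
    (∀ m₁ m₂ : ℕ, εu = (-1) ^ m₁ → εv = (-1) ^ m₂ →
      ∀ α : ℝ, Guv α = (-1) ^ (m₁ + m₂) * Gvu α) := by
  have main : ∀ α : ℝ, Guv α = εu * εv * Gvu α := by
    intro α
    have hcv : HasCompactSupport v :=
      HasCompactSupport.of_support_subset_isCompact isCompact_Icc hsv
    rw [hGuv, hGvu, integral_shift_mul_deriv hu hv hcv,
      ← integral_sub_left_eq_self (fun t => deriv u (t - α) * v t) volume (2 * c + α),
      ← integral_neg, ← integral_const_mul]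
    congr 1
    funext s
    have e1 : 2 * c + α - s - α = 2 * c - s := by ring
    have e2 : 2 * c + α - s = 2 * c - (s - α) := by ring
    rw [e1, e2, deriv_reflect hsymu, hsymv]
    ring
  refine ⟨main, ?_⟩
  intro m₁ m₂ h₁ h₂ α
  rw [main, h₁, h₂, pow_add]
end

section
/- Let A be a real n×n matrix, let U be a real n×r matrix with UᵀU = I_r, let T be an invertible real r×r matrix with A·U = U·T, and let μ be a nonzero real number. Then A·(I_n + U·(μ·T⁻¹ − I_r)·Uᵀ) = A + U·(μ·I_r − T)·Uᵀ. -/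
open Matrix

/-- The preconditioned matrix `A M̂⁻¹` is a rank-`r` modification of `A`:
if `UᵀU = I_r`, `T` is invertible with `AU = UT` and `μ ≠ 0`, then
`A (I_n + U(μT⁻¹ - I_r)Uᵀ) = A + U(μ I_r - T)Uᵀ`. -/
theorem deflated_matrix_formula
    (n r : ℕ)
    (A : Matrix (Fin n) (Fin n) ℝ)
    (U : Matrix (Fin n) (Fin r) ℝ) (hU : Uᵀ * U = 1)
    (T : Matrix (Fin r) (Fin r) ℝ) (hT : IsUnit T)
    (hAU : A * U = U * T)
    (μ : ℝ) (hμ : μ ≠ 0) :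
    A * (1 + U * (μ • T⁻¹ - 1) * Uᵀ) =
      A + U * (μ • (1 : Matrix (Fin r) (Fin r) ℝ) - T) * Uᵀ := by
  have hTT : T * T⁻¹ = 1 := mul_nonsing_inv T ((isUnit_iff_isUnit_det T).mp hT)
  have hcore : T * (μ • T⁻¹ - 1) = μ • (1 : Matrix (Fin r) (Fin r) ℝ) - T := by
    rw [Matrix.mul_sub, Matrix.mul_smul, hTT, Matrix.mul_one]
  rw [Matrix.mul_add, Matrix.mul_one, ← Matrix.mul_assoc, ← Matrix.mul_assoc, hAU,
    Matrix.mul_assoc U T, hcore]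
end

section
/- Let A be a real n×n matrix, let U be a real n×r matrix with UᵀU = I_r, let T be a real r×r matrix with A·U = U·T, and let μ ∈ ℝ. Then the characteristic polynomials satisfy charpoly(A + U·(μ·I_r − T)·Uᵀ) · charpoly(T) = charpoly(A) · (X − μ)^r. -/
/-!
Write `P = UUᵀ`. In an orthonormal basis extending the columns of `U`, a matrix `A` with
`AU = UT` is block upper triangular with diagonal blocks `T` and `A₂₂`, while `(1 - P)A` has
diagonal blocks `0` and `A₂₂`. Hence `X^r · charpoly A = charpoly T · charpoly ((1 - P)A)`, which
is `X_pow_mul_charpoly_of_invariant`. The deflated matrix `B` satisfies `BU = U(μ I_r)` and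
`(1 - P)B = (1 - P)A`, so the lemma applied to both `A` and `B`, followed by cancelling `X^r`,
gives the theorem.
-/

open Matrix Polynomial

/-- Splitting of the characteristic polynomial along an invariant subspace with orthonormal
basis `U`. No completion of `U` to a basis is needed: for the rectangular matrices
`L = [U, 1]` and `N = [UᵀA; (1 - UUᵀ)A]` one has `LN = A`, while `NL` is block upper triangular
with diagonal blocks `T` and `(1 - UUᵀ)A`; and `LN`, `NL` have the same characteristic polynomial
up to a power of `X`. -/
lemma X_pow_mul_charpoly_of_invariant {n r : ℕ}
    (A : Matrix (Fin n) (Fin n) ℝ)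
    (U : Matrix (Fin n) (Fin r) ℝ) (hU : Uᵀ * U = 1)
    (T : Matrix (Fin r) (Fin r) ℝ) (hAU : A * U = U * T) :
    X ^ r * A.charpoly = T.charpoly * ((1 - U * Uᵀ) * A).charpoly := by
  have hT : Uᵀ * A * U = T := by
    rw [Matrix.mul_assoc, hAU, ← Matrix.mul_assoc, hU, Matrix.one_mul]
  have h0 : (1 - U * Uᵀ) * A * U = 0 := by
    rw [Matrix.mul_assoc, hAU, ← Matrix.mul_assoc, Matrix.sub_mul, Matrix.mul_assoc U, hU]
    simp
  have hLN : fromCols U (1 : Matrix (Fin n) (Fin n) ℝ) * fromRows (Uᵀ * A) ((1 - U * Uᵀ) * A) = A := by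
    rw [fromCols_mul_fromRows, Matrix.one_mul, ← Matrix.mul_assoc, ← Matrix.add_mul]
    simp
  have hNL : fromRows (Uᵀ * A) ((1 - U * Uᵀ) * A) * fromCols U (1 : Matrix (Fin n) (Fin n) ℝ) =
      fromBlocks T (Uᵀ * A) 0 ((1 - U * Uᵀ) * A) := by
    rw [fromRows_mul_fromCols, hT, h0, Matrix.mul_one, Matrix.mul_one]
  have h := charpoly_mul_comm' (fromCols U (1 : Matrix (Fin n) (Fin n) ℝ))
    (fromRows (Uᵀ * A) ((1 - U * Uᵀ) * A))
  rw [hLN, hNL, charpoly_fromBlocks_zero₂₁] at h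
  simp only [Fintype.card_sum, Fintype.card_fin] at h
  refine mul_left_cancel₀ (pow_ne_zero n (X_ne_zero (R := ℝ))) ?_
  rw [← h]
  ring

/-- The deflated matrix `A + U(μ I_r - T)Uᵀ` replaces the eigenvalues of `T` by `μ`:
if `UᵀU = I_r` and `AU = UT`, then
`charpoly(A + U(μ I_r - T)Uᵀ) ⬝ charpoly(T) = charpoly(A) ⬝ (X - μ)^r`. -/
theorem deflated_matrix_charpoly
    (n r : ℕ)
    (A : Matrix (Fin n) (Fin n) ℝ)
    (U : Matrix (Fin n) (Fin r) ℝ) (hU : Uᵀ * U = 1)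
    (T : Matrix (Fin r) (Fin r) ℝ) (hAU : A * U = U * T)
    (μ : ℝ) :
    (A + U * (μ • (1 : Matrix (Fin r) (Fin r) ℝ) - T) * Uᵀ).charpoly * T.charpoly =
      A.charpoly * (X - C μ) ^ r := by
  have hBU : (A + U * (μ • (1 : Matrix (Fin r) (Fin r) ℝ) - T) * Uᵀ) * U =
      U * (μ • (1 : Matrix (Fin r) (Fin r) ℝ)) := by
    rw [Matrix.add_mul, hAU, Matrix.mul_assoc _ Uᵀ, hU, Matrix.mul_one, ← Matrix.mul_add,
      add_sub_cancel]
  have hPU : (1 - U * Uᵀ) * U = 0 := by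
    rw [Matrix.sub_mul, Matrix.mul_assoc, hU]
    simp
  have hPB : (1 - U * Uᵀ) * (A + U * (μ • (1 : Matrix (Fin r) (Fin r) ℝ) - T) * Uᵀ) =
      (1 - U * Uᵀ) * A := by
    rw [Matrix.mul_add, ← Matrix.mul_assoc, ← Matrix.mul_assoc, hPU]
    simp
  have hμ : (μ • (1 : Matrix (Fin r) (Fin r) ℝ)).charpoly = (X - C μ) ^ r := by
    rw [smul_one_eq_diagonal, charpoly_diagonal]
    simp
  have hA := X_pow_mul_charpoly_of_invariant A U hU T hAU
  have hB := X_pow_mul_charpoly_of_invariant _ U hU _ hBU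
  rw [hPB, hμ] at hB
  refine mul_left_cancel₀ (pow_ne_zero r (X_ne_zero (R := ℝ))) ?_
  linear_combination T.charpoly * hB - (X - C μ) ^ r * hA
end

section
/- Let N ≥ 3 and ñ be integers with 1 ≤ ñ ≤ N, and let S := {(k, i) : 2 ≤ k ≤ N−1, 2 ≤ i ≤ N−1, i − 1 ≤ k ≤ i + ñ − 1} (viewed as a finite set of pairs of integers). Then 2·|S| = N² − N − 4 − (N − ñ − 2)·max(N − ñ − 1, 0). -/
/-!
The count is by induction on `N`, with `ntz ≥ 1` fixed, where `ntz` may exceed `N`: the correction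
term vanishes for `ntz ≥ N - 1`. Passing from `N` to `N + 1` adds the single new
superdiagonal block `(N - 1, N)` in the new column, and the blocks `(N, i)` with
`max 2 (N - ntz + 1) ≤ i ≤ N` in the new row, i.e. `1 + min ntz (N - 1)` blocks altogether
(`nonzeroBlocks_succ`). This is the increment of the closed formula.
-/

/-- The positions `(k, i)` of the nonzero inner blocks. -/
noncomputable def nonzeroBlocks (N ntz : ℤ) : Finset (ℤ × ℤ) :=
  ((Finset.Icc (2 : ℤ) (N - 1)) ×ˢ (Finset.Icc (2 : ℤ) (N - 1))).filter
    (fun p : ℤ × ℤ => p.2 - 1 ≤ p.1 ∧ p.1 ≤ p.2 + ntz - 1)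

lemma nonzeroBlocks_succ (N ntz : ℤ) (hN : 3 ≤ N) (h1 : 1 ≤ ntz) :
    nonzeroBlocks (N + 1) ntz =
      (nonzeroBlocks N ntz ∪ {(N - 1, N)}) ∪
        ({N} ×ˢ Finset.Icc (max 2 (N - ntz + 1)) N) := by
  ext ⟨k, i⟩
  simp only [nonzeroBlocks, Finset.mem_union, Finset.mem_filter, Finset.mem_product,
    Finset.mem_Icc, Finset.mem_singleton, Prod.mk.injEq]
  omega

lemma card_nonzeroBlocks_succ (N ntz : ℤ) (hN : 3 ≤ N) (h1 : 1 ≤ ntz) :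
    ((nonzeroBlocks (N + 1) ntz).card : ℤ) =
      (nonzeroBlocks N ntz).card + 1 + min ntz (N - 1) := by
  rw [nonzeroBlocks_succ N ntz hN h1, Finset.card_union_of_disjoint,
    Finset.card_union_of_disjoint, Finset.card_product, Int.card_Icc]
  · simp only [Finset.card_singleton]
    omega
  all_goals
    rw [Finset.disjoint_left]
    rintro ⟨k, i⟩
    simp only [nonzeroBlocks, Finset.mem_union, Finset.mem_filter, Finset.mem_product,
      Finset.mem_Icc, Finset.mem_singleton, Prod.mk.injEq]
    omega

lemma two_mul_card_nonzeroBlocks (N ntz : ℤ) (hN : 3 ≤ N) (h1 : 1 ≤ ntz) :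
    2 * ((nonzeroBlocks N ntz).card : ℤ) =
      N ^ 2 - N - 4 - (N - ntz - 2) * max (N - ntz - 1) 0 := by
  induction N, hN using Int.leInduction with
  | base =>
    have h : nonzeroBlocks 3 ntz = {(2, 2)} := by
      ext ⟨k, i⟩
      simp only [nonzeroBlocks, Finset.mem_filter, Finset.mem_product,
        Finset.mem_Icc, Finset.mem_singleton, Prod.mk.injEq]
      omega
    rw [h, Finset.card_singleton]
    -- The correction term is zero: its first factor for `ntz = 1`, its second for `ntz ≥ 2`.
    rcases h1.eq_or_lt with rfl | h2
    · norm_num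
    · rw [max_eq_right (by omega)]
      norm_num
  | succ N hN ih =>
    rw [card_nonzeroBlocks_succ N ntz hN h1, mul_add, mul_add, ih]
    rcases le_total ntz (N - 1) with h | h
    · rw [min_eq_left h, max_eq_left (by omega), max_eq_left (by omega)]
      ring
    · rw [min_eq_right h, max_eq_right (a := N - ntz - 1) (by omega)]
      -- For `ntz = N - 1` the factor `N + 1 - ntz - 2` is zero, otherwise the maximum is.
      rcases h.eq_or_lt with h' | h'
      · obtain rfl : ntz = N - 1 := h'.symm
        ring_nf
      · rw [max_eq_right (by omega)]
        ring

/-- Counting formula for the nonzero inner blocks of the block Hessenberg system matrix: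
for integers `N ≥ 3` and `1 ≤ ntz ≤ N`, the set
`S = {(k, i) : 2 ≤ k ≤ N-1, 2 ≤ i ≤ N-1, i-1 ≤ k ≤ i+ntz-1}` satisfies
`2|S| = N² - N - 4 - (N - ntz - 2)·max(N - ntz - 1, 0)`. -/
theorem nonzero_block_count
    (N ntz : ℤ) (hN : 3 ≤ N) (htz1 : 1 ≤ ntz) (htzN : ntz ≤ N) :
    2 * (((((Finset.Icc (2 : ℤ) (N - 1)) ×ˢ (Finset.Icc (2 : ℤ) (N - 1))).filter
        (fun p : ℤ × ℤ => p.2 - 1 ≤ p.1 ∧ p.1 ≤ p.2 + ntz - 1)).card) : ℤ) =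
      N ^ 2 - N - 4 - (N - ntz - 2) * max (N - ntz - 1) 0 := by
  exact two_mul_card_nonzeroBlocks N ntz hN htz1
end
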